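/- Fix V, α > 0, integers t ≥ 1 and t₀ ≥ 1, iterates x^{t−1}, x^t,...,x^{t+t₀−1} ∈ Δ°, and for each τ ∈ {t,...,t+t₀−1}: convex functions f^{τ−1}, g₁^{τ−1},...,g_L^{τ−1} : C → ℝ with |f^{τ−1}(μ)| ≤ F and Σ_i |g_i^{τ−1}(μ)|² ≤ G² for all μ ∈ Δ, a subgradient p_f^{τ−1} of f^{τ−1} at x^{τ−1} with ‖p_f^{τ−1}‖_* ≤ D₁ and subgradients p_i^{τ−1} of g_i^{τ−1} at x^{τ−1} with Σ_i ‖p_i^{τ−1}‖_*² ≤ D₂², and vectors h_j^{τ−1} ∈ ℝ^d with Σ_j ‖h_j^{τ−1}‖_*² ≤ H²; let b ∈ ℝ^M with Σ_j b_j² ≤ 2RH²/β. Let Q(t) ∈ ℝ^L with Q(t) ≥ 0 and H(t) ∈ ℝ^M, and for τ = t,...,t+t₀−1 suppose: x^τ attains the minimum over Δ of μ ↦ ⟨V·p_f^{τ−1} + Σ_i Q_i(τ)·p_i^{τ−1} + Σ_j H_j(τ)·h_j^{τ−1}, μ⟩ + α·D(μ, x^{τ−1}); Q_i(τ+1) =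 max{Q_i(τ) + g_i^{τ−1}(x^{τ−1}) + ⟨p_i^{τ−1}, x^τ − x^{τ−1}⟩, 0}; H_j(τ+1) = H_j(τ) + ⟨h_j^{τ−1}, x^τ⟩ − b_j. Define C_{V,α,t₀} := 2·(4RH²/β + G² + 2RD₂²/β + V²D₁²/(2αβ) + V·F)·t₀ + 2·((3/2)·G² + 2RD₂²/β + 8RH²/β)·t₀² + 2αR. Then for every μ ∈ Δ: (‖Q(t+t₀)‖₂² + ‖H(t+t₀)‖₂² − ‖Q(t)‖₂² − ‖H(t)‖₂²)/2 ≤ V·Σ_{τ=t}^{t+t₀−1} f^{τ−1}(μ) + Σ_{i=1}^L Q_i(t)·Σ_{τ=t}^{t+t₀−1} g_i^{τ−1}(μ) + Σ_{j=1}^M H_j(t)·Σ_{τ=t}^{t+t₀−1} (⟨h_j^{τ−1}, μ⟩ − b_j) + C_{V,α,t₀}/2. -/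

import Mathlib

/-!
The proof is a drift-plus-penalty argument for mirror descent.

* **One slot.** Squaring the two update rules gives
  `½(Q(τ+1)² - Q(τ)²) ≤ Q(τ) r + ½ r²`, where `r` is the linearised constraint value, and the
  analogous identity for `H`. Since `x^τ` minimises a linear functional plus a Bregman term, the
  three-point inequality (`bregman_pushback`) compares `x^τ` with any `μ ∈ Δ`; convexity
  (the subgradient inequality) replaces linearisations by `f(μ)` and `g(μ)`, and the leftover
  `V⟪p_f, x^{τ-1} - x^τ⟫` is absorbed by strong convexity (`slot_bound`).
* **Freezing the multipliers.** The multipliers move by a bounded amount per slot, so replacing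
  `Q(τ)`, `H(τ)` by `Q(t)`, `H(t)` costs a term linear in `τ - t` (`sum_drift_mul_le`).
* **Summation.** The Bregman terms telescope to `D(μ, x^{t-1}) - D(μ, x^{t+t₀-1})`, which is at
  most `R` (`breg_sub_breg_le`). Nothing is assumed about `φ` at boundary points of `C`, so
  `D(μ, ·) ≥ 0` is only available for interior `μ`; the difference, however, does not involve
  `φ μ` and is continuous in `μ`, so the bound extends to all of `Δ` by approximation.
-/

open scoped RealInnerProductSpace

/-- Bregman divergence `D(x,y) = ω(x) - ω(y) - ⟪∇ω(y), x - y⟫` generated by `φ`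
with gradient map `gφ`. -/
noncomputable def breg {d : ℕ} (φ : EuclideanSpace ℝ (Fin d) → ℝ)
    (gφ : EuclideanSpace ℝ (Fin d) → EuclideanSpace ℝ (Fin d))
    (x y : EuclideanSpace ℝ (Fin d)) : ℝ :=
  φ x - φ y - ⟪gφ y, x - y⟫

/-- Dual norm `‖v‖_* = sup_{‖y‖ ≤ 1} ⟪v, y⟫` associated with a primal norm `nrm`. -/
noncomputable def dualNorm {d : ℕ} (nrm : EuclideanSpace ℝ (Fin d) → ℝ)
    (v : EuclideanSpace ℝ (Fin d)) : ℝ :=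
  sSup ((fun y => ⟪v, y⟫) '' {y | nrm y ≤ 1})

section

open Filter Topology

/-! ### The dual norm -/

/-- In finite dimension any norm dominates a positive multiple of the Euclidean norm. -/
lemma exists_pos_mul_norm_le {d : ℕ} (nrm : EuclideanSpace ℝ (Fin d) → ℝ)
    (hnrm_add : ∀ x y, nrm (x + y) ≤ nrm x + nrm y)
    (hnrm_smul : ∀ (a : ℝ) x, nrm (a • x) = |a| * nrm x)
    (hnrm_def : ∀ x, nrm x = 0 → x = 0) :
    ∃ c, 0 < c ∧ ∀ y, c * ‖y‖ ≤ nrm y := by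
  have hconv : ConvexOn ℝ Set.univ nrm := by
    refine ⟨convex_univ, fun x _ y _ a b ha hb _ => ?_⟩
    refine (hnrm_add _ _).trans ?_
    rw [hnrm_smul, hnrm_smul, abs_of_nonneg ha, abs_of_nonneg hb, smul_eq_mul, smul_eq_mul]
  have hcont : Continuous nrm := hconv.locallyLipschitz.continuous
  have h0 : nrm 0 = 0 := by simpa using hnrm_smul 0 0
  have hnn : ∀ y, 0 ≤ nrm y := by
    intro y
    have h1 := hnrm_add y ((-1 : ℝ) • y)
    rw [hnrm_smul] at h1
    simp [h0] at h1
    linarith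
  rcases (Metric.sphere (0 : EuclideanSpace ℝ (Fin d)) 1).eq_empty_or_nonempty with he | hne
  · refine ⟨1, one_pos, fun y => ?_⟩
    by_cases hy : y = 0
    · simp [hy, h0]
    · exfalso
      have : ‖y‖⁻¹ • y ∈ Metric.sphere (0 : EuclideanSpace ℝ (Fin d)) 1 := by
        simp [norm_smul, hy]
      rw [he] at this
      exact this
  · obtain ⟨z, hz, hzmin⟩ := (isCompact_sphere (0 : EuclideanSpace ℝ (Fin d)) 1).exists_isMinOn
      hne hcont.continuousOn
    have hz1 : ‖z‖ = 1 := by simpa using hz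
    have hzpos : 0 < nrm z := by
      refine lt_of_le_of_ne (hnn z) fun h => ?_
      rw [hnrm_def z h.symm] at hz1
      simp at hz1
    refine ⟨nrm z, hzpos, fun y => ?_⟩
    by_cases hy : y = 0
    · simp [hy, h0]
    · have hmem : ‖y‖⁻¹ • y ∈ Metric.sphere (0 : EuclideanSpace ℝ (Fin d)) 1 := by
        simp [norm_smul, hy]
      have h1 : nrm z ≤ nrm (‖y‖⁻¹ • y) := hzmin hmem
      have hpos : 0 < ‖y‖ := norm_pos_iff.mpr hy
      rw [hnrm_smul, abs_of_pos (inv_pos.mpr hpos), inv_mul_eq_div, le_div_iff₀ hpos] at h1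
      exact h1

/-- Hölder's inequality for the dual norm. The content is that the supremum defining `dualNorm`
is over a bounded set, so it is not a junk value. -/
lemma inner_le_dualNorm {d : ℕ} (nrm : EuclideanSpace ℝ (Fin d) → ℝ)
    (hnrm_add : ∀ x y, nrm (x + y) ≤ nrm x + nrm y)
    (hnrm_smul : ∀ (a : ℝ) x, nrm (a • x) = |a| * nrm x)
    (hnrm_def : ∀ x, nrm x = 0 → x = 0) (v y : EuclideanSpace ℝ (Fin d)) :
    ⟪v, y⟫ ≤ dualNorm nrm v * nrm y := by
  obtain ⟨c, hc, hcy⟩ := exists_pos_mul_norm_le nrm hnrm_add hnrm_smul hnrm_def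
  by_cases hy : y = 0
  · have h0 : nrm 0 = 0 := by simpa using hnrm_smul 0 0
    simp [hy, h0]
  have hpos : 0 < nrm y := lt_of_lt_of_le (mul_pos hc (norm_pos_iff.mpr hy)) (hcy y)
  have hbdd : BddAbove ((fun y => ⟪v, y⟫) '' {y | nrm y ≤ 1}) := by
    refine ⟨‖v‖ * c⁻¹, ?_⟩
    rintro _ ⟨u, hu, rfl⟩
    refine (real_inner_le_norm v u).trans (mul_le_mul_of_nonneg_left ?_ (norm_nonneg v))
    rw [← one_div, le_div_iff₀ hc, mul_comm]
    exact (hcy u).trans hu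
  have hle : ⟪v, (nrm y)⁻¹ • y⟫ ≤ dualNorm nrm v := by
    refine le_csSup hbdd ⟨_, ?_, rfl⟩
    rw [Set.mem_ofPred_eq]
    rw [hnrm_smul, abs_of_pos (inv_pos.mpr hpos), inv_mul_cancel₀ hpos.ne']
  rw [real_inner_smul_right, inv_mul_eq_div, div_le_iff₀ hpos] at hle
  exact hle

lemma sum_inner_sq_le {d n : ℕ} (nrm : EuclideanSpace ℝ (Fin d) → ℝ)
    (hnrm_add : ∀ x y, nrm (x + y) ≤ nrm x + nrm y)
    (hnrm_smul : ∀ (a : ℝ) x, nrm (a • x) = |a| * nrm x)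
    (hnrm_def : ∀ x, nrm x = 0 → x = 0) (v : Fin n → EuclideanSpace ℝ (Fin d))
    (y : EuclideanSpace ℝ (Fin d)) {A B : ℝ}
    (hv : ∑ i, (dualNorm nrm (v i)) ^ 2 ≤ A ^ 2) (hy : nrm y ^ 2 ≤ B) :
    ∑ i, ⟪v i, y⟫ ^ 2 ≤ A ^ 2 * B := by
  have key : ∀ i, ⟪v i, y⟫ ^ 2 ≤ dualNorm nrm (v i) ^ 2 * nrm y ^ 2 := by
    intro i
    rw [← mul_pow]
    refine sq_le_sq' ?_ (inner_le_dualNorm nrm hnrm_add hnrm_smul hnrm_def _ _)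
    have h1 := inner_le_dualNorm nrm hnrm_add hnrm_smul hnrm_def (v i) ((-1 : ℝ) • y)
    rw [hnrm_smul, real_inner_smul_right] at h1
    simp at h1
    linarith
  calc ∑ i, ⟪v i, y⟫ ^ 2 ≤ ∑ i, dualNorm nrm (v i) ^ 2 * nrm y ^ 2 :=
        Finset.sum_le_sum fun i _ => key i
    _ = (∑ i, dualNorm nrm (v i) ^ 2) * nrm y ^ 2 := by rw [Finset.sum_mul]
    _ ≤ A ^ 2 * B := mul_le_mul hv hy (sq_nonneg _) (sq_nonneg _)

/-! ### Bregman divergences -/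

/-- Three-point inequality for a Bregman proximal step. -/
lemma bregman_pushback {d : ℕ} {C Δ : Set (EuclideanSpace ℝ (Fin d))}
    {φ : EuclideanSpace ℝ (Fin d) → ℝ}
    {gφ : EuclideanSpace ℝ (Fin d) → EuclideanSpace ℝ (Fin d)}
    (hgrad : ∀ y ∈ interior C, HasGradientAt φ (gφ y) y) (hΔconv : Convex ℝ Δ)
    {α : ℝ} {w y z μ : EuclideanSpace ℝ (Fin d)}
    (hz : z ∈ Δ ∩ interior C) (hμ : μ ∈ Δ)
    (hmin : IsMinOn (fun u => ⟪w, u⟫ + α * breg φ gφ u y) Δ z) :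
    ⟪w, z⟫ + α * breg φ gφ z y ≤ ⟪w, μ⟫ + α * (breg φ gφ μ y - breg φ gφ μ z) := by
  have hφ : HasFDerivAt φ (innerSL ℝ (gφ z)) z := (hgrad z hz.2).hasFDerivAt
  have hw : ∀ v : EuclideanSpace ℝ (Fin d),
      HasFDerivAt (fun u => ⟪v, u⟫) (innerSL ℝ v) z := fun v => (innerSL ℝ v).hasFDerivAt
  have hD : HasFDerivAt (fun u => ⟪w, u⟫ + α * breg φ gφ u y)
      (innerSL ℝ w + α • (innerSL ℝ (gφ z) - innerSL ℝ (gφ y))) z := by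
    have h1 := (hw w).add (((hφ.sub_const (φ y)).sub
      ((hw (gφ y)).sub_const ⟪gφ y, y⟫)).const_mul α)
    refine h1.congr_of_eventuallyEq (Eventually.of_forall fun u => ?_)
    simp [breg, inner_sub_right]
  have hnn := hmin.localize.hasFDerivWithinAt_nonneg hD.hasFDerivWithinAt
    (sub_mem_posTangentConeAt_of_segment_subset (hΔconv.segment_subset hz.1 hμ))
  simp only [add_apply, smul_apply, sub_apply, innerSL_apply_apply, smul_eq_mul, inner_sub_right] at hnn
  simp only [breg, inner_sub_right]
  linarith

/-- The telescoped Bregman difference is at most `R`, also when `μ` lies on the boundary of `C`. -/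
lemma breg_sub_breg_le {d : ℕ} {C Δ : Set (EuclideanSpace ℝ (Fin d))}
    {φ : EuclideanSpace ℝ (Fin d) → ℝ}
    {gφ : EuclideanSpace ℝ (Fin d) → EuclideanSpace ℝ (Fin d)} {R : ℝ}
    (hCconv : Convex ℝ C) (hΔC : Δ ⊆ C) (hΔconv : Convex ℝ Δ)
    (hnonneg : ∀ x ∈ interior C, ∀ y ∈ interior C, 0 ≤ breg φ gφ x y)
    (hDbound : ∀ x ∈ Δ, ∀ y ∈ Δ ∩ interior C, breg φ gφ x y ≤ R)
    {μ y z : EuclideanSpace ℝ (Fin d)} (hμ : μ ∈ Δ)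
    (hy : y ∈ Δ ∩ interior C) (hz : z ∈ Δ ∩ interior C) :
    breg φ gφ μ y - breg φ gφ μ z ≤ R := by
  -- the difference `D(u,y) - D(u,z)` with `φ u` cancelled
  let F : EuclideanSpace ℝ (Fin d) → ℝ :=
    fun u => φ z - φ y - ⟪gφ y, u - y⟫ + ⟪gφ z, u - z⟫
  have hF : ∀ u, breg φ gφ u y - breg φ gφ u z = F u := by
    intro u; simp only [breg, F]; ring
  have hFc : Continuous F := by fun_prop
  have hpath : Tendsto (fun s : ℝ => F ((1 - s) • μ + s • z)) (𝓝[>] 0) (𝓝 (F μ)) := by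
    have hc : Continuous (fun s : ℝ => F ((1 - s) • μ + s • z)) := hFc.comp (by fun_prop)
    have := hc.tendsto 0
    simp only [sub_zero, one_smul, zero_smul, add_zero] at this
    exact this.mono_left nhdsWithin_le_nhds
  rw [hF]
  refine le_of_tendsto hpath ?_
  filter_upwards [Ioo_mem_nhdsGT (zero_lt_one' ℝ)] with s hs
  have hint : (1 - s) • μ + s • z ∈ interior C :=
    hCconv.combo_self_interior_mem_interior (hΔC hμ) hz.2 (by linarith [hs.2]) hs.1 (by ring)
  have hmem : (1 - s) • μ + s • z ∈ Δ :=
    hΔconv hμ hz.1 (by linarith [hs.2]) hs.1.le (by ring)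
  rw [← hF]
  linarith [hDbound _ hmem y hy, hnonneg _ hint z hz.2]

/-! ### Multiplier updates -/

/-- If each increment of `u` has squared Euclidean norm at most `A` and `‖c‖² ≤ B`, then Young's
inequality bounds the pairing of each increment with `c` by `(A + B) / 2`; the bounds add up. -/
lemma sum_drift_mul_le {n N : ℕ} (u : ℕ → Fin n → ℝ) (c : Fin n → ℝ) {A B : ℝ}
    (hstep : ∀ k < N, ∑ i, (u (k + 1) i - u k i) ^ 2 ≤ A) (hc : ∑ i, c i ^ 2 ≤ B) :
    ∀ k ≤ N, ∑ i, (u k i - u 0 i) * c i ≤ k * ((A + B) / 2) := by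
  intro k
  induction k with
  | zero => intro _; simp
  | succ k ih =>
    intro hk
    have h1 := ih (by omega)
    have h2 : ∑ i, (u (k + 1) i - u k i) * c i ≤ (A + B) / 2 := by
      have h3 : ∑ i, (u (k + 1) i - u k i) * c i
          ≤ ∑ i, ((u (k + 1) i - u k i) ^ 2 + c i ^ 2) / 2 :=
        Finset.sum_le_sum fun i _ => by nlinarith [sq_nonneg (u (k + 1) i - u k i - c i)]
      rw [← Finset.sum_div, Finset.sum_add_distrib] at h3
      linarith [hstep k (by omega)]
    have h4 : ∑ i, (u (k + 1) i - u 0 i) * c i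
        = ∑ i, (u k i - u 0 i) * c i + ∑ i, (u (k + 1) i - u k i) * c i := by
      rw [← Finset.sum_add_distrib]
      exact Finset.sum_congr rfl fun i _ => by ring
    rw [h4]
    push_cast
    linarith

lemma sum_add_sq_le {n : ℕ} (a c : Fin n → ℝ) {A B : ℝ}
    (ha : ∑ i, a i ^ 2 ≤ A) (hc : ∑ i, c i ^ 2 ≤ B) :
    ∑ i, (a i + c i) ^ 2 ≤ 2 * A + 2 * B := by
  have h1 : ∑ i, (a i + c i) ^ 2 ≤ ∑ i, (2 * a i ^ 2 + 2 * c i ^ 2) :=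
    Finset.sum_le_sum fun i _ => by nlinarith [sq_nonneg (a i - c i)]
  rw [Finset.sum_add_distrib, ← Finset.mul_sum, ← Finset.mul_sum] at h1
  linarith

/-- The projection `a ↦ max a 0` does not increase squares. -/
lemma max_zero_sq_le (a : ℝ) : (max a 0) ^ 2 ≤ a ^ 2 := by
  rcases le_total a 0 with h | h
  · rw [max_eq_right h]; nlinarith [sq_nonneg a]
  · rw [max_eq_left h]

lemma max_zero_sub_sq_le {q : ℝ} (hq : 0 ≤ q) (r : ℝ) : (max (q + r) 0 - q) ^ 2 ≤ r ^ 2 := by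
  rcases le_total (q + r) 0 with h | h
  · rw [max_eq_right h]; nlinarith
  · rw [max_eq_left h]; apply le_of_eq; ring

/-! ### The drift bound -/

/-- Drift-plus-penalty inequality in one slot, with current multipliers `q`, `m`, previous iterate
`y`, new iterate `z`, and `A`, `B` bounding the squared norms of the two multiplier increments. -/
lemma slot_bound {d L M : ℕ} {nrm : EuclideanSpace ℝ (Fin d) → ℝ}
    (hnrm_add : ∀ x y, nrm (x + y) ≤ nrm x + nrm y)
    (hnrm_smul : ∀ (a : ℝ) x, nrm (a • x) = |a| * nrm x)
    (hnrm_def : ∀ x, nrm x = 0 → x = 0)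
    {φ : EuclideanSpace ℝ (Fin d) → ℝ}
    {gφ : EuclideanSpace ℝ (Fin d) → EuclideanSpace ℝ (Fin d)}
    {β V α D₁ F A B : ℝ} (hβ : 0 < β) (hV : 0 < V) (hα : 0 < α)
    {y z μ pf : EuclideanSpace ℝ (Fin d)}
    (hstrong : β / 2 * (nrm (z - y)) ^ 2 ≤ breg φ gφ z y)
    {f : EuclideanSpace ℝ (Fin d) → ℝ} {g : Fin L → EuclideanSpace ℝ (Fin d) → ℝ}
    {pg : Fin L → EuclideanSpace ℝ (Fin d)} {h : Fin M → EuclideanSpace ℝ (Fin d)}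
    {b m m' : Fin M → ℝ} {q q' : Fin L → ℝ}
    (hF : |f y| ≤ F) (hpf : f y + ⟪pf, μ - y⟫ ≤ f μ) (hD₁ : dualNorm nrm pf ≤ D₁)
    (hpg : ∀ i, g i y + ⟪pg i, μ - y⟫ ≤ g i μ) (hq : ∀ i, 0 ≤ q i)
    (hpush : ⟪V • pf + ∑ i, q i • pg i + ∑ j, m j • h j, z⟫ + α * breg φ gφ z y
      ≤ ⟪V • pf + ∑ i, q i • pg i + ∑ j, m j • h j, μ⟫
        + α * (breg φ gφ μ y - breg φ gφ μ z))
    (hq' : ∀ i, q' i = max (q i + g i y + ⟪pg i, z - y⟫) 0)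
    (hm' : ∀ j, m' j = m j + ⟪h j, z⟫ - b j)
    (hA : ∑ i, (g i y + ⟪pg i, z - y⟫) ^ 2 ≤ A) (hB : ∑ j, (⟪h j, z⟫ - b j) ^ 2 ≤ B) :
    (∑ i, q' i ^ 2 + ∑ j, m' j ^ 2) / 2 + α * breg φ gφ μ z
      ≤ (∑ i, q i ^ 2 + ∑ j, m j ^ 2) / 2 + α * breg φ gφ μ y
        + V * f μ + ∑ i, q i * g i μ + ∑ j, m j * (⟪h j, μ⟫ - b j)
        + (A / 2 + B / 2 + V ^ 2 * D₁ ^ 2 / (2 * α * β) + V * F) := by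
  have hQ : ∑ i, q' i ^ 2 ≤ ∑ i, q i ^ 2
      + 2 * ∑ i, q i * (g i y + ⟪pg i, z - y⟫) + A := by
    have h1 : ∑ i, q' i ^ 2 ≤ ∑ i, (q i ^ 2 + 2 * (q i * (g i y + ⟪pg i, z - y⟫))
        + (g i y + ⟪pg i, z - y⟫) ^ 2) := by
      refine Finset.sum_le_sum fun i _ => ?_
      rw [hq' i]
      refine (max_zero_sq_le _).trans (le_of_eq (by ring))
    rw [Finset.sum_add_distrib, Finset.sum_add_distrib, ← Finset.mul_sum] at h1
    linarith
  have hM : ∑ j, m' j ^ 2 ≤ ∑ j, m j ^ 2 + 2 * ∑ j, m j * (⟪h j, z⟫ - b j) + B := by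
    have h1 : ∑ j, m' j ^ 2 = ∑ j, (m j ^ 2 + 2 * (m j * (⟪h j, z⟫ - b j))
        + (⟪h j, z⟫ - b j) ^ 2) :=
      Finset.sum_congr rfl fun j _ => by rw [hm' j]; ring
    rw [Finset.sum_add_distrib, Finset.sum_add_distrib, ← Finset.mul_sum] at h1
    linarith
  have hlin : ∀ u, ⟪V • pf + ∑ i, q i • pg i + ∑ j, m j • h j, u⟫
      = V * ⟪pf, u⟫ + ∑ i, q i * ⟪pg i, u⟫ + ∑ j, m j * ⟪h j, u⟫ := by
    intro u
    simp only [inner_add_left, sum_inner, real_inner_smul_left]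
  rw [hlin, hlin] at hpush
  have hgμ : ∑ i, q i * (g i y + ⟪pg i, z - y⟫) - ∑ i, q i * ⟪pg i, z⟫
      + ∑ i, q i * ⟪pg i, μ⟫ ≤ ∑ i, q i * g i μ := by
    rw [← Finset.sum_sub_distrib, ← Finset.sum_add_distrib]
    refine Finset.sum_le_sum fun i _ => ?_
    have h1 := mul_le_mul_of_nonneg_left (hpg i) (hq i)
    simp only [inner_sub_right] at h1 ⊢
    linarith
  have hm1 : ∑ j, m j * (⟪h j, z⟫ - b j) - ∑ j, m j * ⟪h j, z⟫
      + ∑ j, m j * ⟪h j, μ⟫ = ∑ j, m j * (⟪h j, μ⟫ - b j) := by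
    rw [← Finset.sum_sub_distrib, ← Finset.sum_add_distrib]
    exact Finset.sum_congr rfl fun j _ => by ring
  have hfμ : V * ⟪pf, μ⟫ - V * ⟪pf, y⟫ ≤ V * f μ + V * F := by
    have h1 : ⟪pf, μ⟫ - ⟪pf, y⟫ ≤ f μ + F := by
      rw [← inner_sub_right]
      linarith [(abs_le.mp hF).1]
    nlinarith
  -- Young's inequality with weight `α β` trades the linear term for the Bregman term
  have hyoung : V * ⟪pf, y⟫ - V * ⟪pf, z⟫ - α * breg φ gφ z y
      ≤ V ^ 2 * D₁ ^ 2 / (2 * α * β) := by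
    have hsym : nrm (y - z) = nrm (z - y) := by
      have := hnrm_smul (-1) (z - y)
      simpa using this
    have hnn : 0 ≤ nrm (z - y) := by
      obtain ⟨c, hc, hcy⟩ := exists_pos_mul_norm_le nrm hnrm_add hnrm_smul hnrm_def
      exact le_trans (by positivity) (hcy _)
    have h1 : ⟪pf, y⟫ - ⟪pf, z⟫ ≤ D₁ * nrm (z - y) := by
      rw [← inner_sub_right, ← hsym]
      refine (inner_le_dualNorm nrm hnrm_add hnrm_smul hnrm_def _ _).trans ?_
      exact mul_le_mul_of_nonneg_right hD₁ (hsym ▸ hnn)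
    have h2 := mul_le_mul_of_nonneg_left h1 hV.le
    have h3 := mul_le_mul_of_nonneg_left hstrong hα.le
    have h4 : V * (D₁ * nrm (z - y)) - α * (β / 2 * nrm (z - y) ^ 2)
        ≤ V ^ 2 * D₁ ^ 2 / (2 * α * β) := by
      rw [le_div_iff₀ (by positivity)]
      nlinarith [sq_nonneg (V * D₁ - α * β * nrm (z - y))]
    linarith
  linarith

end

/-- **`t₀`-slot drift bound for the dual multipliers.** For every `μ ∈ Δ`,
`(‖Q(t+t₀)‖₂² + ‖H(t+t₀)‖₂² − ‖Q(t)‖₂² − ‖H(t)‖₂²)/2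
 ≤ V·Σ_τ f^{τ−1}(μ) + Σᵢ Qᵢ(t)·Σ_τ gᵢ^{τ−1}(μ) + Σⱼ Hⱼ(t)·Σ_τ (⟪hⱼ^{τ−1},μ⟫−bⱼ)
 + C_{V,α,t₀}/2`. -/
theorem t0_slot_drift_bound {d L M : ℕ}
    (nrm : EuclideanSpace ℝ (Fin d) → ℝ)
    (hnrm_add : ∀ x y, nrm (x + y) ≤ nrm x + nrm y)
    (hnrm_smul : ∀ (a : ℝ) x, nrm (a • x) = |a| * nrm x)
    (hnrm_def : ∀ x, nrm x = 0 → x = 0)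
    (C : Set (EuclideanSpace ℝ (Fin d))) (hCconv : Convex ℝ C)
    (hCint : (interior C).Nonempty)
    (φ : EuclideanSpace ℝ (Fin d) → ℝ)
    (gφ : EuclideanSpace ℝ (Fin d) → EuclideanSpace ℝ (Fin d))
    (hgrad : ∀ y ∈ interior C, HasGradientAt φ (gφ y) y)
    (hgcont : ContinuousOn gφ (interior C))
    (Δ : Set (EuclideanSpace ℝ (Fin d))) (hΔC : Δ ⊆ C)
    (hΔcomp : IsCompact Δ) (hΔconv : Convex ℝ Δ)
    (hΔ0 : (0 : EuclideanSpace ℝ (Fin d)) ∈ Δ)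
    (hΔo : (Δ ∩ interior C).Nonempty)
    (β R : ℝ) (hβ : 0 < β) (hR : 0 < R)
    (hstrong : ∀ x ∈ interior C, ∀ y ∈ interior C,
      β / 2 * (nrm (x - y)) ^ 2 ≤ breg φ gφ x y)
    (hDbound : ∀ x ∈ Δ, ∀ y ∈ Δ ∩ interior C, breg φ gφ x y ≤ R)
    (hdiam : ∀ x ∈ Δ, ∀ y ∈ Δ, (nrm (x - y)) ^ 2 ≤ 2 * R / β)
    (V α : ℝ) (hV : 0 < V) (hα : 0 < α)
    (t t₀ : ℕ) (ht : 1 ≤ t) (ht₀ : 1 ≤ t₀)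
    (D₁ D₂ F G H : ℝ)
    (x : ℕ → EuclideanSpace ℝ (Fin d))
    (hxΔ : ∀ τ, t - 1 ≤ τ → τ ≤ t + t₀ - 1 → x τ ∈ Δ ∩ interior C)
    (f : ℕ → EuclideanSpace ℝ (Fin d) → ℝ)
    (g : ℕ → Fin L → EuclideanSpace ℝ (Fin d) → ℝ)
    (hfconv : ∀ τ ∈ Finset.Ico t (t + t₀), ConvexOn ℝ C (f (τ - 1)))
    (hgconv : ∀ τ ∈ Finset.Ico t (t + t₀), ∀ i, ConvexOn ℝ C (g (τ - 1) i))
    (hF : ∀ τ ∈ Finset.Ico t (t + t₀), ∀ μ ∈ Δ, |f (τ - 1) μ| ≤ F)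
    (hG : ∀ τ ∈ Finset.Ico t (t + t₀), ∀ μ ∈ Δ, ∑ i, (g (τ - 1) i μ) ^ 2 ≤ G ^ 2)
    (pf : ℕ → EuclideanSpace ℝ (Fin d))
    (hpf : ∀ τ ∈ Finset.Ico t (t + t₀), ∀ u ∈ C,
      f (τ - 1) (x (τ - 1)) + ⟪pf (τ - 1), u - x (τ - 1)⟫ ≤ f (τ - 1) u)
    (hD₁ : ∀ τ ∈ Finset.Ico t (t + t₀), dualNorm nrm (pf (τ - 1)) ≤ D₁)
    (pg : ℕ → Fin L → EuclideanSpace ℝ (Fin d))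
    (hpg : ∀ τ ∈ Finset.Ico t (t + t₀), ∀ i, ∀ u ∈ C,
      g (τ - 1) i (x (τ - 1)) + ⟪pg (τ - 1) i, u - x (τ - 1)⟫ ≤ g (τ - 1) i u)
    (hD₂ : ∀ τ ∈ Finset.Ico t (t + t₀), ∑ i, (dualNorm nrm (pg (τ - 1) i)) ^ 2 ≤ D₂ ^ 2)
    (h : ℕ → Fin M → EuclideanSpace ℝ (Fin d))
    (hH : ∀ τ ∈ Finset.Ico t (t + t₀), ∑ j, (dualNorm nrm (h (τ - 1) j)) ^ 2 ≤ H ^ 2)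
    (b : Fin M → ℝ) (hb : ∑ j, (b j) ^ 2 ≤ 2 * R * H ^ 2 / β)
    (Q : ℕ → Fin L → ℝ) (Hm : ℕ → Fin M → ℝ)
    (hQt : ∀ i, 0 ≤ Q t i)
    (hmin : ∀ τ ∈ Finset.Ico t (t + t₀), IsMinOn (fun μ =>
        ⟪V • pf (τ - 1) + ∑ i, Q τ i • pg (τ - 1) i + ∑ j, Hm τ j • h (τ - 1) j, μ⟫
          + α * breg φ gφ μ (x (τ - 1))) Δ (x τ))
    (hQrec : ∀ τ ∈ Finset.Ico t (t + t₀), ∀ i, Q (τ + 1) i =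
      max (Q τ i + g (τ - 1) i (x (τ - 1)) + ⟪pg (τ - 1) i, x τ - x (τ - 1)⟫) 0)
    (hHrec : ∀ τ ∈ Finset.Ico t (t + t₀), ∀ j, Hm (τ + 1) j =
      Hm τ j + ⟪h (τ - 1) j, x τ⟫ - b j) :
    ∀ μ ∈ Δ,
      (∑ i, (Q (t + t₀) i) ^ 2 + ∑ j, (Hm (t + t₀) j) ^ 2
        - ∑ i, (Q t i) ^ 2 - ∑ j, (Hm t j) ^ 2) / 2
      ≤ V * ∑ τ ∈ Finset.Ico t (t + t₀), f (τ - 1) μ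
        + ∑ i, Q t i * ∑ τ ∈ Finset.Ico t (t + t₀), g (τ - 1) i μ
        + ∑ j, Hm t j * ∑ τ ∈ Finset.Ico t (t + t₀), (⟪h (τ - 1) j, μ⟫ - b j)
        + (2 * (4 * R * H ^ 2 / β + G ^ 2 + 2 * R * D₂ ^ 2 / β
              + V ^ 2 * D₁ ^ 2 / (2 * α * β) + V * F) * t₀
            + 2 * (3 / 2 * G ^ 2 + 2 * R * D₂ ^ 2 / β + 8 * R * H ^ 2 / β) * t₀ ^ 2
            + 2 * α * R) / 2 := by
  intro μ hμ
  have hnonneg : ∀ x ∈ interior C, ∀ y ∈ interior C, 0 ≤ breg φ gφ x y := fun x hx y hy =>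
    le_trans (by positivity) (hstrong x hx y hy)
  have hdiam0 : ∀ u ∈ Δ, nrm u ^ 2 ≤ 2 * R / β := fun u hu => by
    simpa using hdiam u hu 0 hΔ0
  have hτ : ∀ k < t₀, t + k ∈ Finset.Ico t (t + t₀) := fun k hk => by
    rw [Finset.mem_Ico]; omega
  have hprev : ∀ k < t₀, x (t + k - 1) ∈ Δ ∩ interior C := fun k hk =>
    hxΔ _ (by omega) (by omega)
  have hcur : ∀ k < t₀, x (t + k) ∈ Δ ∩ interior C := fun k hk =>
    hxΔ _ (by omega) (by omega)
  have hQnn : ∀ k ≤ t₀, ∀ i, 0 ≤ Q (t + k) i := by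
    intro k hk i
    rcases k with _ | k
    · exact hQt i
    · rw [← add_assoc, hQrec (t + k) (hτ k hk) i]
      exact le_max_right _ _
  -- Slots are indexed by `k = τ - t`; `1 ≤ t` makes `t + k - 1` an honest predecessor.
  have hA : ∀ k < t₀, ∑ i, (g (t + k - 1) i (x (t + k - 1))
      + ⟪pg (t + k - 1) i, x (t + k) - x (t + k - 1)⟫) ^ 2
      ≤ 2 * G ^ 2 + 2 * (D₂ ^ 2 * (2 * R / β)) := fun k hk =>
    sum_add_sq_le _ _ (hG _ (hτ k hk) _ (hprev k hk).1)
      (sum_inner_sq_le nrm hnrm_add hnrm_smul hnrm_def _ _ (hD₂ _ (hτ k hk))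
        (hdiam _ (hcur k hk).1 _ (hprev k hk).1))
  have hB : ∀ k < t₀, ∀ u ∈ Δ, ∑ j, (⟪h (t + k - 1) j, u⟫ - b j) ^ 2
      ≤ 2 * (H ^ 2 * (2 * R / β)) + 2 * (2 * R * H ^ 2 / β) := fun k hk u hu => by
    simp only [sub_eq_add_neg]
    exact sum_add_sq_le _ _ (sum_inner_sq_le nrm hnrm_add hnrm_smul hnrm_def _ _
      (hH _ (hτ k hk)) (hdiam0 u hu)) (by simpa using hb)
  have hQstep : ∀ k < t₀, ∑ i, (Q (t + (k + 1)) i - Q (t + k) i) ^ 2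
      ≤ 2 * G ^ 2 + 2 * (D₂ ^ 2 * (2 * R / β)) := fun k hk => by
    refine le_trans (Finset.sum_le_sum fun i _ => ?_) (hA k hk)
    rw [← add_assoc, hQrec (t + k) (hτ k hk) i, add_assoc (Q (t + k) i)]
    exact max_zero_sub_sq_le (hQnn k hk.le i) _
  have hHstep : ∀ k < t₀, ∑ j, (Hm (t + (k + 1)) j - Hm (t + k) j) ^ 2
      ≤ 2 * (H ^ 2 * (2 * R / β)) + 2 * (2 * R * H ^ 2 / β) := fun k hk => by
    refine le_trans (le_of_eq (Finset.sum_congr rfl fun j _ => ?_)) (hB k hk _ (hcur k hk).1)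
    rw [← add_assoc, hHrec (t + k) (hτ k hk) j]
    ring
  set K₁ : ℝ := 4 * R * H ^ 2 / β + G ^ 2 + 2 * R * D₂ ^ 2 / β
    + V ^ 2 * D₁ ^ 2 / (2 * α * β) + V * F with hK₁
  set K₂ : ℝ := 3 / 2 * G ^ 2 + 2 * R * D₂ ^ 2 / β + 8 * R * H ^ 2 / β with hK₂
  have hK₂nn : 0 ≤ K₂ := by positivity
  have hslot : ∀ k < t₀,
      (∑ i, Q (t + (k + 1)) i ^ 2 + ∑ j, Hm (t + (k + 1)) j ^ 2) / 2
          + α * breg φ gφ μ (x (t + (k + 1) - 1))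
        ≤ (∑ i, Q (t + k) i ^ 2 + ∑ j, Hm (t + k) j ^ 2) / 2
          + α * breg φ gφ μ (x (t + k - 1))
          + V * f (t + k - 1) μ + ∑ i, Q t i * g (t + k - 1) i μ
          + ∑ j, Hm t j * (⟪h (t + k - 1) j, μ⟫ - b j) + (K₁ + k * K₂) := by
    intro k hk
    have hk' := hτ k hk
    have h1 := slot_bound hnrm_add hnrm_smul hnrm_def hβ hV hα
      (hstrong _ (hcur k hk).2 _ (hprev k hk).2) (hF _ hk' _ (hprev k hk).1)
      (hpf _ hk' μ (hΔC hμ)) (hD₁ _ hk') (fun i => hpg _ hk' i μ (hΔC hμ)) (hQnn k hk.le)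
      (bregman_pushback hgrad hΔconv (hcur k hk) hμ (hmin _ hk')) (hQrec _ hk') (hHrec _ hk')
      (hA k hk) (hB k hk _ (hcur k hk).1)
    have h2 := sum_drift_mul_le (fun k => Q (t + k)) (fun i => g (t + k - 1) i μ)
      hQstep (hG _ hk' μ hμ) k hk.le
    have h3 := sum_drift_mul_le (fun k => Hm (t + k)) (fun j => ⟪h (t + k - 1) j, μ⟫ - b j)
      hHstep (hB k hk μ hμ) k hk.le
    simp only [add_zero, sub_mul, Finset.sum_sub_distrib] at h2 h3
    have h4 : (k : ℝ) * ((2 * G ^ 2 + 2 * (D₂ ^ 2 * (2 * R / β)) + G ^ 2) / 2)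
        + k * ((2 * (H ^ 2 * (2 * R / β)) + 2 * (2 * R * H ^ 2 / β)
          + (2 * (H ^ 2 * (2 * R / β)) + 2 * (2 * R * H ^ 2 / β))) / 2) = k * K₂ := by
      rw [hK₂]; ring
    have h5 : (2 * G ^ 2 + 2 * (D₂ ^ 2 * (2 * R / β))) / 2
        + (2 * (H ^ 2 * (2 * R / β)) + 2 * (2 * R * H ^ 2 / β)) / 2
        + V ^ 2 * D₁ ^ 2 / (2 * α * β) + V * F = K₁ := by
      rw [hK₁]; ring
    have h6 : t + (k + 1) - 1 = t + k := by omega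
    rw [h6, ← add_assoc]
    linarith
  -- `∑ k < n, k` is bounded by `n ^ 2`.
  have hsum : ∀ n ≤ t₀,
      (∑ i, Q (t + n) i ^ 2 + ∑ j, Hm (t + n) j ^ 2) / 2
          + α * breg φ gφ μ (x (t + n - 1))
        ≤ (∑ i, Q t i ^ 2 + ∑ j, Hm t j ^ 2) / 2 + α * breg φ gφ μ (x (t - 1))
          + ∑ k ∈ Finset.range n, (V * f (t + k - 1) μ + ∑ i, Q t i * g (t + k - 1) i μ
            + ∑ j, Hm t j * (⟪h (t + k - 1) j, μ⟫ - b j)) + (K₁ * n + K₂ * n ^ 2) := by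
    intro n
    induction n with
    | zero => intro _; simp
    | succ n ih =>
      intro hn
      have h1 := ih (by omega)
      have h2 := hslot n (by omega)
      rw [Finset.sum_range_succ]
      push_cast
      have h3 : 0 ≤ K₂ * ((n : ℝ) + 1) := by positivity
      linarith
  have hfin := hsum t₀ le_rfl
  have htel := mul_le_mul_of_nonneg_left (breg_sub_breg_le hCconv hΔC hΔconv hnonneg hDbound hμ
    (hxΔ (t - 1) le_rfl (by omega)) (hxΔ (t + t₀ - 1) (by omega) le_rfl)) hα.le
  simp only [Finset.mul_sum]
  rw [Finset.sum_comm (s := Finset.univ (α := Fin L)),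
    Finset.sum_comm (s := Finset.univ (α := Fin M)), ← Finset.sum_add_distrib,
    ← Finset.sum_add_distrib, Finset.sum_Ico_eq_sum_range, Nat.add_sub_cancel_left]
  linarith
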